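/- arXiv:2403.03033 — 2 statements merged into one kernel-verified Lean document; each statement's English description precedes it below -/
import Mathlib

section
/- Let d ≥ 1, ℓ ∈ ℝ, let v₁,…,v_n ∈ ℤ^d be distinct and set D := ⋃_{i=1}^n B_{v_i}, equipped with the stratification consisting of all open faces of the cubes B_{v_1},…,B_{v_n}, and let g, p : ℝ^d → ℝ be C² functions. If the pair (g,p) is locally topologically stable at level ℓ on each cube B_{v_i} (i.e. for every t ∈ [0,1] the function g + tp has no stratified critical point at level ℓ in B_{v_i}), then there exists a stratified isotopy H of D such that H({x ∈ D : g(x) ≥ ℓ}, t) = {x ∈ D : g(x) + t·p(x) ≥ ℓ} for every t ∈ [0,1], and H(·,0) is the identity map on D. -/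
open MeasureTheory Filter Set Topology Metric
open scoped ENNReal NNReal

noncomputable section

/-- `ℝ^d` as Euclidean space. -/
abbrev Euc (d : ℕ) := EuclideanSpace ℝ (Fin d)

/-- The closed unit cube `B_v = v + [0,1]^d`. -/
def unitCube (d : ℕ) (v : Fin d → ℤ) : Set (Euc d) :=
  {x | ∀ i, (v i : ℝ) ≤ x i ∧ x i ≤ (v i : ℝ) + 1}

/-- The open face of the cube `B_v` described by `s`: `some false ↦ {v i}`,
`some true ↦ {v i + 1}`, `none ↦ (v i, v i + 1)`. -/
def openFace (d : ℕ) (v : Fin d → ℤ) (s : Fin d → Option Bool) : Set (Euc d) :=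
  {x | ∀ i, match s i with
    | some false => x i = (v i : ℝ)
    | some true => x i = (v i : ℝ) + 1
    | none => (v i : ℝ) < x i ∧ x i < (v i : ℝ) + 1}

/-- `x` is a stratified critical point of `h` in the cube `B_v` at level `ℓ`. -/
def IsStratCrit (d : ℕ) (h : Euc d → ℝ) (v : Fin d → ℤ) (ℓ : ℝ) (x : Euc d) : Prop :=
  ∃ s : Fin d → Option Bool, x ∈ openFace d v s ∧ h x = ℓ ∧
    ∀ i, s i = none → fderiv ℝ h x (EuclideanSpace.single i 1) = 0

/-- `(g,p)` is locally topologically stable on `B_v` at level `ℓ`. -/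
def LocStable (d : ℕ) (g p : Euc d → ℝ) (v : Fin d → ℤ) (ℓ : ℝ) : Prop :=
  ∀ t ∈ Set.Icc (0:ℝ) 1, ∀ x : Euc d, ¬ IsStratCrit d (fun y => g y + t * p y) v ℓ x

/-- Union of the unbounded connected components of `A`. -/
def unboundedPart (d : ℕ) (A : Set (Euc d)) : Set (Euc d) :=
  {x | x ∈ A ∧ ¬ Bornology.IsBounded (connectedComponentIn A x)}

/-- Union of the bounded connected components of `A`. -/
def boundedPart (d : ℕ) (A : Set (Euc d)) : Set (Euc d) :=
  A \ unboundedPart d A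

/-- The locally unstable set `U_Loc(g,p)` at level `ℓ`. -/
def ULoc (d : ℕ) (g p : Euc d → ℝ) (ℓ : ℝ) : Set (Fin d → ℤ) :=
  {w | ¬ LocStable d g p w ℓ}

/-- The finite-range unstable set `U_FR(g,p)` at level `ℓ`. -/
def UFR (d : ℕ) (g p : Euc d → ℝ) (ℓ : ℝ) : Set (Fin d → ℤ) :=
  ULoc d g p ℓ ∪
    {w | ∃ u ∈ ULoc d g p ℓ,
      (∃ x ∈ unitCube d w, ∃ y ∈ unitCube d u,
        JoinedIn (boundedPart d {z | ℓ ≤ g z}) x y) ∨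
      (∃ x ∈ unitCube d w, ∃ y ∈ unitCube d u,
        JoinedIn (boundedPart d {z | ℓ ≤ g z + p z}) x y)}

/-- `A` has at most finitely many connected components. -/
def FinitelyManyComponents (d : ℕ) (A : Set (Euc d)) : Prop :=
  {C : Set (Euc d) | ∃ x ∈ A, C = connectedComponentIn A x}.Finite

/-- `H` is a stratified isotopy of the union `D` of the cubes `B_{v i}`:
it is continuous on `D × [0,1]`, each time slice is a homeomorphism of `D`
onto itself, and each stratum (open face) is preserved at every time. -/
def IsStratIsotopy (d n : ℕ) (v : Fin n → Fin d → ℤ) (H : Euc d → ℝ → Euc d) : Prop :=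
  ContinuousOn (fun q : Euc d × ℝ => H q.1 q.2) ((⋃ i, unitCube d (v i)) ×ˢ Set.Icc 0 1) ∧
  (∀ t ∈ Set.Icc (0:ℝ) 1,
    ∃ e : (⋃ i, unitCube d (v i)) ≃ₜ (⋃ i, unitCube d (v i)),
      ∀ x : (⋃ i, unitCube d (v i)), (e x : Euc d) = H x t) ∧
  (∀ t ∈ Set.Icc (0:ℝ) 1, ∀ i : Fin n, ∀ s : Fin d → Option Bool,
    (fun x => H x t) '' openFace d (v i) s = openFace d (v i) s)

/-- The cube `Λ_r = [-r,r]^d`. -/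
def bigCube (d : ℕ) (r : ℝ) : Set (Euc d) :=
  {x | ∀ i, |x i| ≤ r}

/-!
Damp the `i`-th component of the gradient of `F t = g + t p` by the factor `sin² (π x i)`, which
vanishes exactly on the hyperplanes `x i = m`, `m ∈ ℤ`. Stability says that on `D` this damped
gradient can only vanish where `F t ≠ ℓ`, so a suitable multiple of it, cut off outside a
neighbourhood of `D`, is a bounded Lipschitz vector field along which `F t - ℓ` satisfies a
homogeneous linear differential inequality. A solution of such an inequality keeps its sign. The
same holds for the functions `x i - m`, because the field is Lipschitz and its `i`-th component
vanishes where `x i = m`. Hence the flow preserves both the superlevel sets and the open faces.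
-/

open Function
open scoped Manifold

theorem eqOn_of_isIntegralCurveOn_Icc {E : Type*} [NormedAddCommGroup E] [NormedSpace ℝ E]
    {v : ℝ → E → E} {K : ℝ≥0} {a b t₀ : ℝ} {β γ : ℝ → E}
    (hv : ∀ t ∈ Icc a b, LipschitzWith K (v t))
    (hβ : IsIntegralCurveOn β v (Icc a b)) (hγ : IsIntegralCurveOn γ v (Icc a b))
    (ht₀ : t₀ ∈ Icc a b) (h : β t₀ = γ t₀) : EqOn β γ (Icc a b) := by
  have hleft : Icc a t₀ ⊆ Icc a b := Icc_subset_Icc_right ht₀.2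
  have hright : Icc t₀ b ⊆ Icc a b := Icc_subset_Icc_left ht₀.1
  have deriv_left {δ : ℝ → E} (hδ : IsIntegralCurveOn δ v (Icc a b)) :
      ∀ t ∈ Ioc a t₀, HasDerivWithinAt δ (v t (δ t)) (Iic t) t := fun t ht =>
    (hδ t (hleft (Ioc_subset_Icc_self ht))).mono_of_mem_nhdsWithin
      (Icc_mem_nhdsLE_of_mem ⟨ht.1, ht.2.trans ht₀.2⟩)
  have deriv_right {δ : ℝ → E} (hδ : IsIntegralCurveOn δ v (Icc a b)) :
      ∀ t ∈ Ico t₀ b, HasDerivWithinAt δ (v t (δ t)) (Ici t) t := fun t ht =>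
    (hδ t (hright (Ico_subset_Icc_self ht))).mono_of_mem_nhdsWithin
      (Icc_mem_nhdsGE_of_mem ⟨ht₀.1.trans ht.1, ht.2⟩)
  rw [← Icc_union_Icc_eq_Icc ht₀.1 ht₀.2]
  refine EqOn.union ?_ ?_
  · exact ODE_solution_unique_of_mem_Icc_left (s := fun _ => univ)
      (fun t ht => (hv t (hleft (Ioc_subset_Icc_self ht))).lipschitzOnWith)
      (hβ.continuousOn.mono hleft) (deriv_left hβ) (fun _ _ => trivial)
      (hγ.continuousOn.mono hleft) (deriv_left hγ) (fun _ _ => trivial) h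
  · exact ODE_solution_unique_of_mem_Icc_right (s := fun _ => univ)
      (fun t ht => (hv t (hright (Ico_subset_Icc_self ht))).lipschitzOnWith)
      (hβ.continuousOn.mono hright) (deriv_right hβ) (fun _ _ => trivial)
      (hγ.continuousOn.mono hright) (deriv_right hγ) (fun _ _ => trivial) h

section LinearInequality

variable {φ φ' : ℝ → ℝ} {C a b s t : ℝ}

theorem eqOn_zero_of_abs_deriv_le_mul_abs
    (hφ : ∀ t ∈ Icc a b, HasDerivWithinAt φ (φ' t) (Icc a b) t)
    (hC : ∀ t ∈ Icc a b, |φ' t| ≤ C * |φ t|) (hs : s ∈ Icc a b) (h0 : φ s = 0) :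
    EqOn φ 0 (Icc a b) := by
  -- `φ` solves the linear equation `y' = (φ' / φ) y`; where `φ = 0` also `φ' = 0`, and `0 / 0 = 0`.
  let v : ℝ → ℝ → ℝ := fun t y => φ' t / φ t * y
  have hv : ∀ t ∈ Icc a b, LipschitzWith C.toNNReal (v t) := fun t ht =>
    LipschitzWith.of_dist_le_mul fun y z => by
      rw [Real.dist_eq, Real.dist_eq, ← mul_sub, abs_mul, abs_div]
      gcongr
      exact (div_le_of_le_mul₀ (abs_nonneg _) C.toNNReal.2
        ((hC t ht).trans (by gcongr; exact Real.le_coe_toNNReal C)))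
  refine eqOn_of_isIntegralCurveOn_Icc hv (fun t ht => ?_) (fun t _ => ?_) hs h0
  · refine (hφ t ht).congr_deriv (div_mul_cancel_of_imp fun hφt => ?_).symm
    simpa [hφt] using hC t ht
  · exact (hasDerivWithinAt_const t (Icc a b) (0 : ℝ)).congr_deriv (mul_zero _).symm

theorem sign_eq_of_abs_deriv_le_mul_abs
    (hφ : ∀ t ∈ Icc a b, HasDerivWithinAt φ (φ' t) (Icc a b) t)
    (hC : ∀ t ∈ Icc a b, |φ' t| ≤ C * |φ t|) (hs : s ∈ Icc a b) (ht : t ∈ Icc a b) :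
    SignType.sign (φ s) = SignType.sign (φ t) := by
  by_cases hzero : ∃ u ∈ Icc a b, φ u = 0
  · obtain ⟨u, hu, hφu⟩ := hzero
    have h := eqOn_zero_of_abs_deriv_le_mul_abs hφ hC hu hφu
    simp only [h hs, h ht, Pi.zero_apply]
  · push Not at hzero
    have hsign : ContinuousOn (fun u => SignType.sign (φ u)) (Icc a b) := fun u hu =>
      (continuousAt_sign_of_ne_zero (hzero u hu)).comp_continuousWithinAt
        (hφ u hu).continuousWithinAt
    exact isPreconnected_Icc.constant hsign hs ht

end LinearInequality

section Flow

variable {E : Type*} [NormedAddCommGroup E] [NormedSpace ℝ E]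

/-- A time-dependent vector field which over the times in `I` is continuous in time, Lipschitz in
space with constant `K`, and bounded by `M`: the global hypotheses under which it has a flow. -/
structure IsBddLipschitzOn (v : ℝ → E → E) (I : Set ℝ) (K M : ℝ≥0) : Prop where
  continuousOn (x : E) : ContinuousOn (v · x) I
  lipschitzWith : ∀ t ∈ I, LipschitzWith K (v t)
  norm_le : ∀ t ∈ I, ∀ x, ‖v t x‖ ≤ M

/-- `Φ x` is, for every point `x`, an integral curve of the time-dependent vector field `v` over the
times in `I` which passes through `x` at time `t₀`. -/
structure IsFlowOn (Φ : E → ℝ → E) (v : ℝ → E → E) (I : Set ℝ) (t₀ : ℝ) : Prop where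
  apply_initial (x : E) : Φ x t₀ = x
  isIntegralCurveOn (x : E) : IsIntegralCurveOn (Φ x) v I

/-- The time-dependent set `S` is carried along by the vector field `v`, forwards and backwards in
time: an integral curve over `I` which lies in `S` at one time lies in `S` at all times. -/
def IsTransportedOn (S : ℝ → Set E) (v : ℝ → E → E) (I : Set ℝ) : Prop :=
  ∀ ⦃γ : ℝ → E⦄, IsIntegralCurveOn γ v I → ∀ ⦃s⦄, s ∈ I → ∀ ⦃t⦄, t ∈ I → γ s ∈ S s → γ t ∈ S t

variable {v : ℝ → E → E} {K M : ℝ≥0} {a b t₀ t : ℝ} {I : Set ℝ} {Φ : E → ℝ → E}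

theorem isTransportedOn_iUnion {ι : Sort*} {S : ι → ℝ → Set E}
    (h : ∀ j, IsTransportedOn (S j) v I) : IsTransportedOn (fun t => ⋃ j, S j t) v I :=
  fun _ hγ _ hs _ ht hmem =>
    let ⟨j, hj⟩ := mem_iUnion.1 hmem
    mem_iUnion.2 ⟨j, h j hγ hs ht hj⟩

theorem IsFlowOn.image_eq_of_isTransportedOn {S : ℝ → Set E} (hΦ : IsFlowOn Φ v I t₀)
    (hS : IsTransportedOn S v I) (ht₀ : t₀ ∈ I) (ht : t ∈ I) (hsurj : Surjective (Φ · t)) :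
    (Φ · t) '' S t₀ = S t := by
  refine Subset.antisymm ?_ fun y hy => ?_
  · rintro _ ⟨x, hx, rfl⟩
    exact hS (hΦ.isIntegralCurveOn x) ht₀ ht (by rwa [hΦ.apply_initial])
  · obtain ⟨x, rfl⟩ := hsurj y
    refine ⟨x, ?_, rfl⟩
    simpa only [hΦ.apply_initial] using hS (hΦ.isIntegralCurveOn x) ht ht₀ hy

theorem IsFlowOn.injective (hΦ : IsFlowOn Φ v (Icc a b) t₀)
    (hv : ∀ t ∈ Icc a b, LipschitzWith K (v t)) (ht₀ : t₀ ∈ Icc a b) (ht : t ∈ Icc a b) :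
    Injective (Φ · t) := fun x y hxy => by
  simpa only [hΦ.apply_initial] using eqOn_of_isIntegralCurveOn_Icc hv (hΦ.isIntegralCurveOn x)
    (hΦ.isIntegralCurveOn y) ht hxy ht₀

variable [CompleteSpace E]

theorem IsBddLipschitzOn.exists_continuousOn_flow_closedBall
    (hv : IsBddLipschitzOn v (Icc a b) K M) (ht₀ : t₀ ∈ Icc a b) (x₀ : E) (r : ℝ≥0) :
    ∃ α : E × ℝ → E, (∀ x ∈ closedBall x₀ r,
      α (x, t₀) = x ∧ IsIntegralCurveOn (fun t => α (x, t)) v (Icc a b)) ∧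
      ContinuousOn α (closedBall x₀ r ×ˢ Icc a b) := by
  have hPL : IsPicardLindelof v ⟨t₀, ht₀⟩ x₀ (r + M * (b - a).toNNReal) r M K :=
    { lipschitzOnWith := fun t ht => (hv.lipschitzWith t ht).lipschitzOnWith
      continuousOn := fun x _ => hv.continuousOn x
      norm_le := fun t ht x _ => hv.norm_le t ht x
      mul_max_le := by
        have hmax : max (b - t₀) (t₀ - a) ≤ (b - a).toNNReal :=
          (max_le (by linarith [ht₀.1]) (by linarith [ht₀.2])).trans (Real.le_coe_toNNReal _)
        push_cast
        rw [add_sub_cancel_left]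
        gcongr }
  exact hPL.exists_forall_mem_closedBall_eq_hasDerivWithinAt_continuousOn

theorem IsBddLipschitzOn.exists_isIntegralCurveOn
    (hv : IsBddLipschitzOn v (Icc a b) K M) (ht₀ : t₀ ∈ Icc a b) (x : E) :
    ∃ γ : ℝ → E, γ t₀ = x ∧ IsIntegralCurveOn γ v (Icc a b) :=
  let ⟨α, hα, _⟩ := hv.exists_continuousOn_flow_closedBall ht₀ x 0
  ⟨fun t => α (x, t), hα x (mem_closedBall_self le_rfl)⟩

theorem IsBddLipschitzOn.exists_isFlowOn
    (hv : IsBddLipschitzOn v (Icc a b) K M) (ht₀ : t₀ ∈ Icc a b) :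
    ∃ Φ : E → ℝ → E, IsFlowOn Φ v (Icc a b) t₀ := by
  choose Φ hΦ₀ hΦ using hv.exists_isIntegralCurveOn ht₀
  exact ⟨Φ, hΦ₀, hΦ⟩

theorem IsFlowOn.continuousOn (hΦ : IsFlowOn Φ v (Icc a b) t₀)
    (hv : IsBddLipschitzOn v (Icc a b) K M) (ht₀ : t₀ ∈ Icc a b) :
    ContinuousOn (uncurry Φ) (univ ×ˢ Icc a b) := by
  rintro ⟨x, t⟩ ⟨-, ht⟩
  obtain ⟨α, hα, hαc⟩ := hv.exists_continuousOn_flow_closedBall ht₀ x 1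
  have hΦα : EqOn (uncurry Φ) α (closedBall x (1 : ℝ≥0) ×ˢ Icc a b) := fun ⟨y, u⟩ hyu =>
    eqOn_of_isIntegralCurveOn_Icc hv.lipschitzWith (hΦ.isIntegralCurveOn y) (hα y hyu.1).2 ht₀
      ((hΦ.apply_initial y).trans (hα y hyu.1).1.symm) hyu.2
  refine (hαc.congr hΦα (x, t) ⟨mem_closedBall_self zero_le_one, ht⟩).mono_of_mem_nhdsWithin ?_
  rw [nhdsWithin_prod_eq, nhdsWithin_univ]
  exact prod_mem_prod (closedBall_mem_nhds x zero_lt_one) self_mem_nhdsWithin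

theorem IsFlowOn.surjective (hΦ : IsFlowOn Φ v (Icc a b) t₀)
    (hv : IsBddLipschitzOn v (Icc a b) K M) (ht₀ : t₀ ∈ Icc a b) (ht : t ∈ Icc a b) :
    Surjective (Φ · t) := fun y => by
  obtain ⟨γ, hγt, hγ⟩ := hv.exists_isIntegralCurveOn ht y
  exact ⟨γ t₀, (eqOn_of_isIntegralCurveOn_Icc hv.lipschitzWith (hΦ.isIntegralCurveOn _) hγ ht₀
    (hΦ.apply_initial _) ht).trans hγt⟩

end Flow

theorem exists_homeomorph_of_bijOn {X Y : Type*} [TopologicalSpace X] [TopologicalSpace Y]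
    [T2Space Y] {φ : X → Y} {A : Set X} {B : Set Y} (hA : IsCompact A) (hφ : ContinuousOn φ A)
    (hbij : BijOn φ A B) : ∃ e : A ≃ₜ B, ∀ x : A, (e x : Y) = φ x := by
  have := isCompact_iff_compactSpace.1 hA
  have hcont : Continuous (hbij.equiv φ) := hφ.mapsToRestrict hbij.mapsTo
  exact ⟨hcont.homeoOfEquivCompactToT2, fun _ => rfl⟩

section Cutoff

variable {E G : Type*} [NormedAddCommGroup E] [NormedSpace ℝ E] [FiniteDimensional ℝ E]
  [NormedAddCommGroup G] [NormedSpace ℝ G]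

theorem exists_cutoff_smul_contDiff {k : ℕ∞} {W : E → G} {A U : Set E}
    (hA : IsCompact A) (hU : IsOpen U) (hAU : A ⊆ U) (hW : ContDiffOn ℝ k W U) :
    ∃ χ : E → ℝ, EqOn χ 1 A ∧ ContDiff ℝ k (χ • W) ∧ HasCompactSupport (χ • W) := by
  obtain ⟨L, hL, hAL, hLU⟩ := exists_compact_between hA hU hAU
  obtain ⟨χ, hχ₀, hχ₁, -⟩ := exists_contMDiffMap_zero_one_of_isClosed 𝓘(ℝ, E) (n := k)
    isOpen_interior.isClosed_compl hA.isClosed (disjoint_compl_left_iff_subset.2 hAL)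
  have hχL : tsupport χ ⊆ L := closure_minimal
    (fun x hx => interior_subset (not_not.1 fun h => hx (hχ₀ h))) hL.isClosed
  have hχW : tsupport (⇑χ • W) ⊆ tsupport χ := tsupport_smul_subset_left _ _
  refine ⟨χ, hχ₁, contDiff_iff_contDiffAt.2 fun x => ?_,
    hL.of_isClosed_subset (isClosed_tsupport _) (hχW.trans hχL)⟩
  by_cases hx : x ∈ tsupport χ
  · exact χ.contMDiff.contDiff.contDiffAt.smul (hW.contDiffAt (hU.mem_nhds (hLU (hχL hx))))
  · exact contDiffAt_const.congr_of_eventuallyEq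
      (notMem_tsupport_iff_eventuallyEq.1 fun h => hx (hχW h))

end Cutoff

theorem exists_isBddLipschitzOn_of_hasCompactSupport {E : Type*} [NormedAddCommGroup E]
    [NormedSpace ℝ E] {v : ℝ → E → E} (hv : ContDiff ℝ 1 (uncurry v))
    (hc : HasCompactSupport (uncurry v)) (I : Set ℝ) :
    ∃ K M : ℝ≥0, IsBddLipschitzOn v I K M := by
  obtain ⟨K, hK⟩ := hv.lipschitzWith_of_hasCompactSupport hc one_ne_zero
  obtain ⟨M, hM⟩ := hc.exists_bound_of_continuous hv.continuous
  exact ⟨K, M.toNNReal,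
    { continuousOn := fun x => (hv.continuous.comp (by fun_prop : Continuous (·, x))).continuousOn
      lipschitzWith := fun t _ => (mul_one K) ▸ hK.comp (LipschitzWith.prodMk_left t)
      norm_le := fun t _ x => (hM (t, x)).trans (Real.le_coe_toNNReal M) }⟩

theorem fderiv_uncurry_apply {E G : Type*} [NormedAddCommGroup E] [NormedSpace ℝ E]
    [NormedAddCommGroup G] [NormedSpace ℝ G] {F : ℝ → E → G} {t : ℝ} {x : E}
    (hF : DifferentiableAt ℝ (uncurry F) (t, x)) (τ : ℝ) (w : E) :
    fderiv ℝ (uncurry F) (t, x) (τ, w) =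
      τ • fderiv ℝ (uncurry F) (t, x) (1, 0) + fderiv ℝ (F t) x w := by
  have hslice : HasFDerivAt (F t) _ x := hF.hasFDerivAt.comp x (hasFDerivAt_prodMk_right t x)
  rw [hslice.fderiv, ← map_smul, ContinuousLinearMap.comp_apply, ContinuousLinearMap.inr_apply,
    ← map_add]
  simp

section Superlevel

variable {E : Type*} [NormedAddCommGroup E] [NormedSpace ℝ E] {v : ℝ → E → E} {F : ℝ → E → ℝ}
  {D : ℝ → Set E} {C ℓ a b : ℝ}

theorem isTransportedOn_superlevel_inter (hF : Differentiable ℝ (uncurry F))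
    (hD : IsTransportedOn D v (Icc a b))
    (hC : ∀ t ∈ Icc a b, ∀ x ∈ D t,
      |fderiv ℝ (uncurry F) (t, x) (1, v t x)| ≤ C * |F t x - ℓ|) :
    IsTransportedOn (fun t => {x | ℓ ≤ F t x} ∩ D t) v (Icc a b) := by
  rintro γ hγ s hs t ht ⟨hle, hmem⟩
  have hγD : ∀ u ∈ Icc a b, γ u ∈ D u := fun u hu => hD hγ hs hu hmem
  have hderiv : ∀ u ∈ Icc a b, HasDerivWithinAt (fun u => F u (γ u) - ℓ)
      (fderiv ℝ (uncurry F) (u, γ u) (1, v u (γ u))) (Icc a b) u := fun u hu =>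
    ((hF (u, γ u)).hasFDerivAt.comp_hasDerivWithinAt (f := fun u => (u, γ u)) u
      ((hasDerivWithinAt_id u _).prodMk (hγ u hu))).sub_const ℓ
  have hsign := sign_eq_of_abs_deriv_le_mul_abs hderiv (fun u hu => hC u hu _ (hγD u hu)) hs ht
  refine ⟨?_, hγD t ht⟩
  rwa [mem_ofPred_eq, ← sub_nonneg, ← sign_nonneg_iff, ← hsign, sign_nonneg_iff, sub_nonneg]

end Superlevel

section Cubes

variable {d : ℕ} {v : Fin d → ℤ} {x y : Euc d}

theorem isCompact_unitCube (v : Fin d → ℤ) : IsCompact (unitCube d v) := by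
  have h : unitCube d v = (EuclideanSpace.equiv (Fin d) ℝ).toHomeomorph ⁻¹'
      Icc (fun i => (v i : ℝ)) (fun i => (v i : ℝ) + 1) := by
    ext x
    exact forall_and
  rw [h, Homeomorph.isCompact_preimage]
  exact isCompact_Icc

theorem openFace_subset_unitCube (v : Fin d → ℤ) (s : Fin d → Option Bool) :
    openFace d v s ⊆ unitCube d v := by
  intro x hx i
  have hi := hx i
  split at hi
  · constructor <;> linarith
  · constructor <;> linarith
  · exact ⟨hi.1.le, hi.2.le⟩

theorem exists_mem_openFace (hx : x ∈ unitCube d v) : ∃ s, x ∈ openFace d v s := by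
  have hcoord : ∀ i, ∃ o : Option Bool, match o with
      | some false => x i = (v i : ℝ)
      | some true => x i = (v i : ℝ) + 1
      | none => (v i : ℝ) < x i ∧ x i < (v i : ℝ) + 1 := fun i => by
    rcases (hx i).1.eq_or_lt with hlo | hlo
    · exact ⟨some false, hlo.symm⟩
    · rcases (hx i).2.eq_or_lt with hhi | hhi
      · exact ⟨some true, hhi⟩
      · exact ⟨none, hlo, hhi⟩
  choose s hs using hcoord
  exact ⟨s, hs⟩

theorem iUnion_openFace (v : Fin d → ℤ) : ⋃ s, openFace d v s = unitCube d v :=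
  (iUnion_subset (openFace_subset_unitCube v)).antisymm fun _ hx =>
    mem_iUnion.2 (exists_mem_openFace hx)

theorem mem_openFace_of_sign_eq {s : Fin d → Option Bool}
    (hxy : ∀ i (m : ℤ), SignType.sign (x i - m) = SignType.sign (y i - m))
    (hx : x ∈ openFace d v s) : y ∈ openFace d v s := by
  have heq i (m : ℤ) (h : x i = m) : y i = m := by
    rwa [← sub_eq_zero, ← sign_eq_zero_iff, ← hxy, sign_eq_zero_iff, sub_eq_zero]
  have hgt i (m : ℤ) (h : m < x i) : m < y i := by
    rwa [← sub_pos, ← sign_eq_one_iff, ← hxy, sign_eq_one_iff, sub_pos]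
  have hlt i (m : ℤ) (h : x i < m) : y i < m := by
    rwa [← sub_neg, ← sign_eq_neg_one_iff, ← hxy, sign_eq_neg_one_iff, sub_neg]
  intro i
  have hi := hx i
  have heq' := heq i (v i + 1)
  have hlt' := hlt i (v i + 1)
  push_cast at heq' hlt'
  split at hi
  · exact heq i _ hi
  · exact heq' hi
  · exact ⟨hgt i _ hi.1, hlt' hi.2⟩

end Cubes

theorem abs_apply_le_mul_abs_sub_of_lipschitzWith {d : ℕ} {K : ℝ≥0} {w : Euc d → Euc d}
    {i : Fin d} {c : ℝ} (hK : LipschitzWith K w) (hw : ∀ x, x i = c → w x i = 0) (x : Euc d) :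
    |w x i| ≤ K * |x i - c| := by
  let y : Euc d := x + EuclideanSpace.single i (c - x i)
  have hy : w y i = 0 := hw y (by simp [y])
  calc |w x i| = ‖(w x - w y) i‖ := by simp [hy]
    _ ≤ ‖w x - w y‖ := PiLp.norm_apply_le _ i
    _ ≤ K * ‖x - y‖ := hK.norm_sub_le _ _
    _ = K * |x i - c| := by
      rw [sub_add_cancel_left, norm_neg, PiLp.norm_single, Real.norm_eq_abs, abs_sub_comm]

section GridTangency

variable {d : ℕ} {K M : ℝ≥0} {a b : ℝ} {w : ℝ → Euc d → Euc d}

/-- A time-dependent vector field is tangent to all hyperplanes `x i = m` with `m` an integer, hence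
to all open faces of the unit cubes. -/
def IsTangentToGrid (w : ℝ → Euc d → Euc d) : Prop :=
  ∀ t x i (m : ℤ), x i = (m : ℝ) → w t x i = 0

theorem IsTangentToGrid.sign_sub_eq (hw : IsTangentToGrid w)
    (hK : ∀ t ∈ Icc a b, LipschitzWith K (w t)) {γ : ℝ → Euc d}
    (hγ : IsIntegralCurveOn γ w (Icc a b)) {s t : ℝ} (hs : s ∈ Icc a b) (ht : t ∈ Icc a b)
    (i : Fin d) (m : ℤ) : SignType.sign (γ s i - m) = SignType.sign (γ t i - m) := by
  have hderiv : ∀ u ∈ Icc a b,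
      HasDerivWithinAt (fun u => γ u i - m) (w u (γ u) i) (Icc a b) u := fun u hu =>
    ((EuclideanSpace.proj (𝕜 := ℝ) i).hasFDerivAt.comp_hasDerivWithinAt u (hγ u hu)).sub_const _
  exact sign_eq_of_abs_deriv_le_mul_abs hderiv
    (fun u hu => abs_apply_le_mul_abs_sub_of_lipschitzWith (hK u hu) (fun x => hw u x i m) _) hs ht

theorem IsTangentToGrid.isTransportedOn_openFace (hw : IsTangentToGrid w)
    (hK : ∀ t ∈ Icc a b, LipschitzWith K (w t)) (v : Fin d → ℤ) (s : Fin d → Option Bool) :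
    IsTransportedOn (fun _ => openFace d v s) w (Icc a b) :=
  fun _ hγ _ hs _ ht => mem_openFace_of_sign_eq (hw.sign_sub_eq hK hγ hs ht)

theorem IsTangentToGrid.isTransportedOn_iUnion_unitCube (hw : IsTangentToGrid w)
    (hK : ∀ t ∈ Icc a b, LipschitzWith K (w t)) {ι : Sort*} (v : ι → Fin d → ℤ) :
    IsTransportedOn (fun _ => ⋃ i, unitCube d (v i)) w (Icc a b) := by
  simp only [← iUnion_openFace]
  exact isTransportedOn_iUnion fun i => isTransportedOn_iUnion fun s =>
    hw.isTransportedOn_openFace hK (v i) s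

theorem IsFlowOn.isStratIsotopy {Φ : Euc d → ℝ → Euc d} (hΦ : IsFlowOn Φ w (Icc 0 1) 0)
    (hbl : IsBddLipschitzOn w (Icc 0 1) K M) (hw : IsTangentToGrid w) {n : ℕ}
    (v : Fin n → Fin d → ℤ) : IsStratIsotopy d n v Φ := by
  have h0 : (0 : ℝ) ∈ Icc (0 : ℝ) 1 := left_mem_Icc.2 zero_le_one
  have hcont := hΦ.continuousOn hbl h0
  have himage {S : Set (Euc d)} (hS : IsTransportedOn (fun _ => S) w (Icc 0 1)) (t : ℝ)
      (ht : t ∈ Icc 0 1) : (Φ · t) '' S = S :=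
    hΦ.image_eq_of_isTransportedOn hS h0 ht (hΦ.surjective hbl h0 ht)
  refine ⟨hcont.mono (prod_mono_left (subset_univ _)), fun t ht => ?_, fun t ht i s =>
    himage (hw.isTransportedOn_openFace hbl.lipschitzWith (v i) s) t ht⟩
  have hcubes := himage (hw.isTransportedOn_iUnion_unitCube hbl.lipschitzWith v) t ht
  refine exists_homeomorph_of_bijOn (isCompact_iUnion fun i => isCompact_unitCube (v i))
    (hcont.comp (by fun_prop : Continuous (·, t)).continuousOn fun x _ => ⟨trivial, ht⟩)
    ⟨mapsTo_iff_image_subset.2 hcubes.subset, (hΦ.injective hbl.lipschitzWith h0 ht).injOn,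
      hcubes.superset⟩

end GridTangency

theorem sin_pi_mul_ne_zero_of_int_lt_of_lt {x : ℝ} {m : ℤ} (hlo : (m : ℝ) < x) (hhi : x < m + 1) :
    Real.sin (Real.pi * x) ≠ 0 := by
  rw [Real.sin_ne_zero_iff]
  intro k hk
  have hkx : (k : ℝ) = x := mul_right_cancel₀ Real.pi_ne_zero (hk.trans (mul_comm _ _))
  rw [← hkx] at hlo hhi
  have hlo' : m < k := by exact_mod_cast hlo
  have hhi' : k < m + 1 := by exact_mod_cast hhi
  omega

section GridGradient

variable {d : ℕ} {h : Euc d → ℝ} {ℓ : ℝ} {x : Euc d}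

/-- The gradient of `h` with its `i`-th component damped by the factor `sin² (π x i)`, which makes
it tangent to all faces of the unit cubes. -/
def gridGradient (h : Euc d → ℝ) (x : Euc d) : Euc d :=
  WithLp.toLp 2 fun i => Real.sin (Real.pi * x i) ^ 2 * fderiv ℝ h x (EuclideanSpace.single i 1)

/-- The sum of `(h x - ℓ)²` and `∑ i, (sin (π x i) ∂ᵢ h x)²`. It is nonnegative, and its zeros in a
unit cube are the stratified critical points of `h` at level `ℓ`. -/
def stabilityGap (h : Euc d → ℝ) (ℓ : ℝ) (x : Euc d) : ℝ :=
  (h x - ℓ) ^ 2 + fderiv ℝ h x (gridGradient h x)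

theorem gridGradient_apply_of_eq_int {i : Fin d} {m : ℤ} (hx : x i = m) :
    gridGradient h x i = 0 := by
  simp [gridGradient, hx, mul_comm Real.pi]

theorem fderiv_gridGradient (h : Euc d → ℝ) (x : Euc d) : fderiv ℝ h x (gridGradient h x) =
    ∑ i, (Real.sin (Real.pi * x i) * fderiv ℝ h x (EuclideanSpace.single i 1)) ^ 2 := by
  conv_lhs => rw [← (EuclideanSpace.basisFun (Fin d) ℝ).sum_repr (gridGradient h x), map_sum]
  refine Finset.sum_congr rfl fun i _ => ?_
  simp only [EuclideanSpace.basisFun_repr, EuclideanSpace.basisFun_apply, map_smul, gridGradient,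
    smul_eq_mul]
  ring

theorem stabilityGap_pos {v : Fin d → ℤ} (hx : x ∈ unitCube d v)
    (hcrit : ¬ IsStratCrit d h v ℓ x) : 0 < stabilityGap h ℓ x := by
  have hsum : 0 ≤ ∑ i, (Real.sin (Real.pi * x i) *
      fderiv ℝ h x (EuclideanSpace.single i 1)) ^ 2 := Finset.sum_nonneg fun i _ => sq_nonneg _
  rw [stabilityGap, fderiv_gridGradient]
  refine (add_nonneg (sq_nonneg _) hsum).lt_of_ne' fun hgap => hcrit ?_
  obtain ⟨hlevel, hcoord⟩ := (add_eq_zero_iff_of_nonneg (sq_nonneg _) hsum).1 hgap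
  rw [Finset.sum_eq_zero_iff_of_nonneg fun i _ => sq_nonneg _] at hcoord
  obtain ⟨s, hs⟩ := exists_mem_openFace hx
  refine ⟨s, hs, sub_eq_zero.1 ((pow_eq_zero_iff two_ne_zero).1 hlevel), fun i hi => ?_⟩
  have hsi := hs i
  simp only [hi] at hsi
  have hprod := (pow_eq_zero_iff two_ne_zero).1 (hcoord i (Finset.mem_univ i))
  exact (mul_eq_zero.1 hprod).resolve_left (sin_pi_mul_ne_zero_of_int_lt_of_lt hsi.1 hsi.2)

end GridGradient

section TrackingField

variable {d : ℕ} {F : ℝ → Euc d → ℝ} {ℓ t : ℝ} {x : Euc d}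

/-- The multiple of the grid gradient of `F t` along whose integral curves `F - ℓ` solves a
homogeneous linear differential equation, so that its sign is constant. Where the stability
gap of `F t` vanishes, it takes the junk value `0`. -/
def trackingField (F : ℝ → Euc d → ℝ) (ℓ t : ℝ) (x : Euc d) : Euc d :=
  -(fderiv ℝ (uncurry F) (t, x) (1, 0) / stabilityGap (F t) ℓ x) • gridGradient (F t) x

theorem fderiv_uncurry_trackingField (hF : DifferentiableAt ℝ (uncurry F) (t, x))
    (hgap : stabilityGap (F t) ℓ x ≠ 0) :
    fderiv ℝ (uncurry F) (t, x) (1, trackingField F ℓ t x) =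
      fderiv ℝ (uncurry F) (t, x) (1, 0) * (F t x - ℓ) / stabilityGap (F t) ℓ x *
        (F t x - ℓ) := by
  have hgrad : fderiv ℝ (F t) x (gridGradient (F t) x) =
      stabilityGap (F t) ℓ x - (F t x - ℓ) ^ 2 := (add_sub_cancel_left _ _).symm
  rw [fderiv_uncurry_apply hF, one_smul, trackingField, map_smul, hgrad, smul_eq_mul]
  field_simp
  ring

theorem contDiff_gridGradient (hF : ContDiff ℝ 2 (uncurry F)) :
    ContDiff ℝ 1 fun z : ℝ × Euc d => gridGradient (F z.1) z.2 := by
  refine contDiff_euclidean.2 fun i => ?_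
  have hcoord : ContDiff ℝ 1 fun z : ℝ × Euc d => z.2 i := contDiff_euclidean.1 contDiff_snd i
  have hderiv : ContDiff ℝ 1 fun z : ℝ × Euc d =>
      fderiv ℝ (F z.1) z.2 (EuclideanSpace.single i 1) :=
    (ContDiff.fderiv (f := fun z : ℝ × Euc d => F z.1) (m := 2)
      (hF.comp (by fun_prop : ContDiff ℝ 2 fun q : (ℝ × Euc d) × Euc d => (q.1.1, q.2)))
      contDiff_snd (by norm_num)).clm_apply contDiff_const
  exact ((contDiff_const.mul hcoord).sin.pow 2).mul hderiv

theorem contDiff_stabilityGap (hF : ContDiff ℝ 2 (uncurry F)) (ℓ : ℝ) :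
    ContDiff ℝ 1 fun z : ℝ × Euc d => stabilityGap (F z.1) ℓ z.2 := by
  have hF1 : ContDiff ℝ 1 (uncurry F) := hF.of_le one_le_two
  have hslice (z : ℝ × Euc d) : fderiv ℝ (F z.1) z.2 (gridGradient (F z.1) z.2) =
      fderiv ℝ (uncurry F) z (0, gridGradient (F z.1) z.2) := by
    rw [fderiv_uncurry_apply (hF1.differentiable one_ne_zero z), zero_smul, zero_add]
  simp only [stabilityGap, hslice]
  exact ((hF1.sub contDiff_const).pow 2).add ((hF.fderiv_right (by norm_num)).clm_apply
    (contDiff_const.prodMk (contDiff_gridGradient hF)))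

theorem contDiffOn_trackingField (hF : ContDiff ℝ 2 (uncurry F)) (ℓ : ℝ) :
    ContDiffOn ℝ 1 (uncurry (trackingField F ℓ)) {z | stabilityGap (F z.1) ℓ z.2 ≠ 0} := by
  have htime : ContDiff ℝ 1 fun z : ℝ × Euc d => fderiv ℝ (uncurry F) z (1, 0) :=
    (hF.fderiv_right (by norm_num)).clm_apply contDiff_const
  exact ((htime.contDiffOn.div (contDiff_stabilityGap hF ℓ).contDiffOn fun _ hz => hz).neg).smul
    (contDiff_gridGradient hF).contDiffOn

theorem isTangentToGrid_smul_trackingField (χ : ℝ × Euc d → ℝ) (F : ℝ → Euc d → ℝ) (ℓ : ℝ) :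
    IsTangentToGrid fun t x => χ (t, x) • trackingField F ℓ t x := fun t x i m hx => by
  simp [trackingField, gridGradient_apply_of_eq_int hx]

theorem exists_isBddLipschitzOn_abs_fderiv_le (hF : ContDiff ℝ 2 (uncurry F)) {I : Set ℝ}
    {D : Set (Euc d)} (hI : IsCompact I) (hD : IsCompact D)
    (hgap : ∀ t ∈ I, ∀ x ∈ D, stabilityGap (F t) ℓ x ≠ 0) :
    ∃ (w : ℝ → Euc d → Euc d) (K M : ℝ≥0) (C : ℝ), IsBddLipschitzOn w I K M ∧
      IsTangentToGrid w ∧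
      ∀ t ∈ I, ∀ x ∈ D, |fderiv ℝ (uncurry F) (t, x) (1, w t x)| ≤ C * |F t x - ℓ| := by
  have hgapC := contDiff_stabilityGap hF ℓ
  have hAU : I ×ˢ D ⊆ {z | stabilityGap (F z.1) ℓ z.2 ≠ 0} := fun z hz => hgap z.1 hz.1 z.2 hz.2
  obtain ⟨χ, hχ, hsmooth, hsupp⟩ := exists_cutoff_smul_contDiff (hI.prod hD)
    (isOpen_ne_fun hgapC.continuous continuous_const) hAU (contDiffOn_trackingField hF ℓ)
  obtain ⟨K, M, hKM⟩ := exists_isBddLipschitzOn_of_hasCompactSupport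
    (v := fun t x => χ (t, x) • trackingField F ℓ t x) hsmooth hsupp I
  have hcoeff : ContinuousOn (fun z : ℝ × Euc d => fderiv ℝ (uncurry F) z (1, 0) *
      (F z.1 z.2 - ℓ) / stabilityGap (F z.1) ℓ z.2) (I ×ˢ D) :=
    ((((hF.continuous_fderiv two_ne_zero).clm_apply continuous_const).mul
      (hF.continuous.sub continuous_const)).continuousOn).div hgapC.continuous.continuousOn hAU
  obtain ⟨C, hC⟩ := (hI.prod hD).exists_bound_of_continuousOn hcoeff
  refine ⟨_, K, M, C, hKM, isTangentToGrid_smul_trackingField χ F ℓ, fun t ht x hx => ?_⟩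
  have hmem : (t, x) ∈ I ×ˢ D := ⟨ht, hx⟩
  rw [hχ hmem, Pi.one_apply, one_smul, fderiv_uncurry_trackingField
    (hF.differentiable two_ne_zero _) (hgap t ht x hx), abs_mul]
  exact mul_le_mul_of_nonneg_right (hC _ hmem) (abs_nonneg _)

end TrackingField

theorem statement_1_general (d n : ℕ) (ℓ : ℝ) (v : Fin n → Fin d → ℤ) (F : ℝ → Euc d → ℝ)
    (hF : ContDiff ℝ 2 (uncurry F))
    (hstable : ∀ i, ∀ t ∈ Icc (0 : ℝ) 1, ∀ x, ¬ IsStratCrit d (F t) (v i) ℓ x) :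
    ∃ H : Euc d → ℝ → Euc d, IsStratIsotopy d n v H ∧
      (∀ t ∈ Icc (0 : ℝ) 1, (H · t) '' ({x | ℓ ≤ F 0 x} ∩ ⋃ i, unitCube d (v i)) =
        {x | ℓ ≤ F t x} ∩ ⋃ i, unitCube d (v i)) ∧
      (∀ x ∈ ⋃ i, unitCube d (v i), H x 0 = x) := by
  have h0 : (0 : ℝ) ∈ Icc (0 : ℝ) 1 := left_mem_Icc.2 zero_le_one
  have hgap : ∀ t ∈ Icc (0 : ℝ) 1, ∀ x ∈ ⋃ i, unitCube d (v i), stabilityGap (F t) ℓ x ≠ 0 :=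
    fun t ht x hx =>
      let ⟨i, hi⟩ := mem_iUnion.1 hx
      (stabilityGap_pos hi (hstable i t ht x)).ne'
  obtain ⟨w, K, M, C, hbl, htan, hC⟩ := exists_isBddLipschitzOn_abs_fderiv_le hF isCompact_Icc
    (isCompact_iUnion fun i => isCompact_unitCube (v i)) hgap
  obtain ⟨Φ, hΦ⟩ := hbl.exists_isFlowOn h0
  have htransported := isTransportedOn_superlevel_inter (hF.differentiable two_ne_zero)
    (htan.isTransportedOn_iUnion_unitCube hbl.lipschitzWith v) hC
  exact ⟨Φ, hΦ.isStratIsotopy hbl htan v,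
    fun t ht => hΦ.image_eq_of_isTransportedOn htransported h0 ht (hΦ.surjective hbl h0 ht),
    fun x _ => hΦ.apply_initial x⟩

/-- If `(g,p)` is locally topologically stable at level `ℓ` on each of the
distinct unit cubes `B_{v i}`, then there is a stratified isotopy `H` of `D = ⋃ B_{v i}`
carrying `{g ≥ ℓ} ∩ D` onto `{g + tp ≥ ℓ} ∩ D` for every `t ∈ [0,1]`, starting at the
identity. -/
theorem statement_1 (d n : ℕ) (hd : 1 ≤ d) (ℓ : ℝ)
    (v : Fin n → Fin d → ℤ) (hv : Function.Injective v)
    (g p : Euc d → ℝ) (hg : ContDiff ℝ 2 g) (hp : ContDiff ℝ 2 p)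
    (hstable : ∀ i : Fin n, LocStable d g p (v i) ℓ) :
    ∃ H : Euc d → ℝ → Euc d, IsStratIsotopy d n v H ∧
      (∀ t ∈ Set.Icc (0:ℝ) 1,
        (fun x => H x t) '' ({x | ℓ ≤ g x} ∩ ⋃ i, unitCube d (v i)) =
          {x | ℓ ≤ g x + t * p x} ∩ ⋃ i, unitCube d (v i)) ∧
      (∀ x ∈ ⋃ i, unitCube d (v i), H x 0 = x) := by
  have hF : ContDiff ℝ 2 (uncurry fun t x => g x + t * p x) := by unfold uncurry; fun_prop
  simpa using statement_1_general d n ℓ v (fun t x => g x + t * p x) hF hstable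

end
end

section
/- For every d ≥ 1 there exists a constant C_d ≥ 20, depending only on d, with the following property. Let B := B_w = w + [0,1]^d be a unit cube, ℓ ∈ ℝ, let g, p : ℝ^d → ℝ be C², and let A₁ ∈ (0,1), A₂ ≥ 1 and A₀ ∈ (0, A₁²/(C_d·A₂)) satisfy: |∇g(x)| > A₁ for every x ∈ B with g(x) = ℓ; ‖∇²g(x)‖ < A₂ for every x ∈ B; sup_{x∈B} max(|p(x)|, |∇p(x)|) < A₀; and p(x) = 0 for every x ∈ B with dist(x, ∂B) ≤ 2A₀/A₁. Then there exist a relatively open neighbourhood V of {g = ℓ} ∩ B in B on which ∇g does not vanish, and an injective C¹ map φ : V → B, such that for every x ∈ V there is a real number r_x with |r_x| ≤ 2A₀/A₁, φ(x) = x + r_x·∇g(x)/|∇g(x)|, and (g + p)(φ(x)) = g(x). -/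
open MeasureTheory Filter Set Topology Metric
open scoped ENNReal NNReal

noncomputable section

/-! Within `R = 2 A₀ / A₁` of `x` the gradient of `g` varies by at most `A₂ R < A₁ / 2`, and that of
`g + p` differs from `∇g x` by less than `|∇g x|`. So along the normal line through `x` the function
`g + p` is strictly monotone and crosses the value `g x` between the times `-R` and `R`. -/

theorem inter_frontier_nonempty_of_isPreconnected {X : Type*} [TopologicalSpace X] {s t : Set X}
    (ht : IsPreconnected t) (hs : (t ∩ s).Nonempty) (hs' : (t \ interior s).Nonempty) :
    (t ∩ frontier s).Nonempty := by
  by_contra! hempty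
  have hcover : t ⊆ interior s ∪ (closure s)ᶜ := fun y hyt => by
    by_contra hy
    rw [mem_union, mem_compl_iff, not_or, not_not] at hy
    exact eq_empty_iff_forall_notMem.1 hempty y ⟨hyt, hy.2, hy.1⟩
  obtain ⟨x, hxt, hxs⟩ := hs
  have hx : x ∈ interior s := (hcover hxt).resolve_right (not_not_intro (subset_closure hxs))
  obtain ⟨z, hzt, hz⟩ := hs'
  exact hz (ht.subset_left_of_subset_union isOpen_interior isClosed_closure.isOpen_compl
    (disjoint_compl_right_iff_subset.2 interior_subset_closure) hcover ⟨x, hxt, hx⟩ hzt)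

theorem infDist_frontier_le_dist {E : Type*} [NormedAddCommGroup E] [NormedSpace ℝ E] {B : Set E}
    {x z : E} (hx : x ∈ B) (hz : z ∉ interior B) : infDist x (frontier B) ≤ dist x z := by
  obtain ⟨y, hy, hyB⟩ := inter_frontier_nonempty_of_isPreconnected
    (convex_segment x z).isPreconnected ⟨x, left_mem_segment ℝ x z, hx⟩
    ⟨z, right_mem_segment ℝ x z, hz⟩
  calc infDist x (frontier B) ≤ dist x y := infDist_le_dist_of_mem hyB
    _ ≤ dist x z := by
      rw [dist_comm x, dist_comm x, dist_eq_norm, dist_eq_norm]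
      exact norm_sub_le_of_mem_segment hy

theorem exists_contDiffAt_implicit_of_hasDerivAt {𝕜 E : Type*} [RCLike 𝕜] [NormedAddCommGroup E]
    [NormedSpace 𝕜 E] [CompleteSpace E] {n : WithTop ℕ∞} (hn : n ≠ 0) {F : E × 𝕜 → 𝕜} {x : E}
    {r c : 𝕜} (hF : ContDiffAt 𝕜 n F (x, r)) (hc : HasDerivAt (fun s => F (x, s)) c r)
    (hc₀ : c ≠ 0) :
    ∃ ψ : E → 𝕜, ContDiffAt 𝕜 n ψ x ∧ ψ x = r ∧ ∀ᶠ y in 𝓝 x, F (y, ψ y) = F (x, r) := by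
  have hpartial : fderiv 𝕜 F (x, r) (0, 1) = c :=
    ((hF.differentiableAt hn).hasFDerivAt.comp_hasDerivAt r
      ((hasDerivAt_const r x).prodMk (hasDerivAt_id r))).unique hc
  have hinv : (fderiv 𝕜 F (x, r) ∘L .inr 𝕜 E 𝕜).IsInvertible := by
    refine ⟨ContinuousLinearEquiv.unitsEquivAut 𝕜 (Units.mk0 c hc₀), ?_⟩
    ext
    simp [hpartial]
  exact ⟨hF.implicitFunction hn hinv, hF.contDiffAt_implicitFunction hn hinv,
    hF.implicitFunction_apply_self hn hinv, hF.eventually_apply_implicitFunction hn hinv⟩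

theorem norm_fderiv_sub_le_of_lipschitzOnWith {E : Type*} [NormedAddCommGroup E] [NormedSpace ℝ E]
    {B : Set E} {g : E → ℝ} {K : ℝ≥0} (hlip : LipschitzOnWith K (fderiv ℝ g) B) {x z : E} {R : ℝ}
    (hx : x ∈ B) (hz : z ∈ B ∩ closedBall x R) : ‖fderiv ℝ g z - fderiv ℝ g x‖ ≤ K * R :=
  (hlip.norm_sub_le hz.1 hx).trans (by gcongr; exact mem_closedBall_iff_norm.1 hz.2)

theorem abs_sub_sub_fderiv_le_of_lipschitzOnWith {E : Type*} [NormedAddCommGroup E]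
    [NormedSpace ℝ E] {B : Set E} (hB : Convex ℝ B) {g : E → ℝ} (hg : Differentiable ℝ g) {K : ℝ≥0}
    (hlip : LipschitzOnWith K (fderiv ℝ g) B) {x y : E} (hx : x ∈ B) (hy : y ∈ B) :
    |g y - g x - fderiv ℝ g x (y - x)| ≤ K * ‖y - x‖ ^ 2 := by
  calc |g y - g x - fderiv ℝ g x (y - x)| ≤ K * ‖y - x‖ * ‖y - x‖ :=
        (hB.inter (convex_closedBall x ‖y - x‖)).norm_image_sub_le_of_norm_fderiv_le'
          (fun z _ => hg z) (fun z => norm_fderiv_sub_le_of_lipschitzOnWith hlip hx)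
          ⟨hx, mem_closedBall_self (norm_nonneg _)⟩ ⟨hy, mem_closedBall_iff_norm.2 le_rfl⟩
    _ = K * ‖y - x‖ ^ 2 := by ring

variable {E : Type*} [NormedAddCommGroup E] [InnerProductSpace ℝ E] [CompleteSpace E]

section UnitNormal

/-- The unit normal `∇g / |∇g|` to the level sets of `g`, the direction in which the level set is
moved; it is `0` at the critical points of `g`. -/
def unitNormal (g : E → ℝ) (x : E) : E := ‖gradient g x‖⁻¹ • gradient g x

theorem norm_gradient (g : E → ℝ) (x : E) : ‖gradient g x‖ = ‖fderiv ℝ g x‖ :=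
  (InnerProductSpace.toDual ℝ E).symm.norm_map _

theorem contDiff_gradient {n : WithTop ℕ∞} {g : E → ℝ} (hg : ContDiff ℝ (n + 1) g) :
    ContDiff ℝ n (gradient g) :=
  (InnerProductSpace.toDual ℝ E).symm.contDiff.comp (hg.fderiv_right le_rfl)

variable {g h : E → ℝ} {x : E}

theorem contDiffAt_unitNormal {n : WithTop ℕ∞} (hg : ContDiff ℝ (n + 1) g)
    (hx : gradient g x ≠ 0) : ContDiffAt ℝ n (unitNormal g) x :=
  have hgrad := (contDiff_gradient hg).contDiffAt (x := x)
  ((hgrad.norm ℝ hx).inv (norm_ne_zero_iff.2 hx)).smul hgrad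

theorem norm_unitNormal (hx : gradient g x ≠ 0) : ‖unitNormal g x‖ = 1 :=
  norm_smul_inv_norm hx

theorem norm_smul_unitNormal (hx : gradient g x ≠ 0) (r : ℝ) : ‖r • unitNormal g x‖ = |r| := by
  rw [norm_smul, norm_unitNormal hx, mul_one, Real.norm_eq_abs]

theorem norm_gradient_mul_inner_unitNormal (hx : gradient g x ≠ 0) (v : E) :
    ‖gradient g x‖ * inner ℝ (unitNormal g x) v = fderiv ℝ g x v := by
  rw [← real_inner_smul_left, unitNormal, smul_inv_smul₀ (norm_ne_zero_iff.2 hx),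
    inner_gradient_left]

theorem fderiv_unitNormal (hx : gradient g x ≠ 0) :
    fderiv ℝ g x (unitNormal g x) = ‖gradient g x‖ := by
  rw [← norm_gradient_mul_inner_unitNormal hx, real_inner_self_eq_norm_sq, norm_unitNormal hx,
    one_pow, mul_one]

theorem add_smul_unitNormal_mem_closedBall (hx : gradient g x ≠ 0) {r R : ℝ} :
    x + r • unitNormal g x ∈ closedBall x R ↔ |r| ≤ R := by
  rw [mem_closedBall_iff_norm, add_sub_cancel_left, norm_smul_unitNormal hx]

theorem fderiv_unitNormal_pos {z : E} (hz : ‖fderiv ℝ h z - fderiv ℝ g x‖ < ‖gradient g x‖) :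
    0 < fderiv ℝ h z (unitNormal g x) := by
  have hx : gradient g x ≠ 0 := norm_pos_iff.1 ((norm_nonneg _).trans_lt hz)
  have hle := (fderiv ℝ h z - fderiv ℝ g x).le_opNorm (unitNormal g x)
  rw [norm_unitNormal hx, mul_one, Real.norm_eq_abs, sub_apply, fderiv_unitNormal hx] at hle
  linarith [neg_le_of_abs_le hle]

theorem abs_sub_sub_norm_gradient_mul_le {s : Set E} (hs : Convex ℝ s) (hh : Differentiable ℝ h)
    {δ : ℝ} (hδ : ∀ z ∈ s, ‖fderiv ℝ h z - fderiv ℝ g x‖ ≤ δ) (hx : gradient g x ≠ 0) {a b : ℝ}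
    (ha : x + a • unitNormal g x ∈ s) (hb : x + b • unitNormal g x ∈ s) :
    |h (x + b • unitNormal g x) - h (x + a • unitNormal g x) - ‖gradient g x‖ * (b - a)|
      ≤ δ * |b - a| := by
  have hmean := hs.norm_image_sub_le_of_norm_fderiv_le' (fun z _ => hh z) hδ ha hb
  rwa [add_sub_add_left_eq_sub, ← sub_smul, norm_smul_unitNormal hx, map_smul,
    fderiv_unitNormal hx, smul_eq_mul, mul_comm (b - a), Real.norm_eq_abs] at hmean

theorem sub_mul_abs_sub_le_abs_sub {s : Set E} (hs : Convex ℝ s) (hh : Differentiable ℝ h)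
    {δ : ℝ} (hδ : ∀ z ∈ s, ‖fderiv ℝ h z - fderiv ℝ g x‖ ≤ δ) (hx : gradient g x ≠ 0) {a b : ℝ}
    (ha : x + a • unitNormal g x ∈ s) (hb : x + b • unitNormal g x ∈ s) :
    (‖gradient g x‖ - δ) * |b - a|
      ≤ |h (x + b • unitNormal g x) - h (x + a • unitNormal g x)| := by
  have hdev := abs_sub_sub_norm_gradient_mul_le hs hh hδ hx ha hb
  have htri := abs_sub_abs_le_abs_sub (‖gradient g x‖ * (b - a))
    (h (x + b • unitNormal g x) - h (x + a • unitNormal g x))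
  rw [abs_mul, abs_norm, abs_sub_comm (_ * _)] at htri
  linarith

theorem exists_contDiffAt_root_along_unitNormal (hg : ContDiff ℝ 2 g) (hh : ContDiff ℝ 1 h)
    (hx : gradient g x ≠ 0) {r : ℝ} (hr : h (x + r • unitNormal g x) = g x)
    (hderiv : fderiv ℝ h (x + r • unitNormal g x) (unitNormal g x) ≠ 0) :
    ∃ ψ : E → ℝ, ContDiffAt ℝ 1 ψ x ∧ ψ x = r ∧
      ∀ᶠ y in 𝓝 x, h (y + ψ y • unitNormal g y) = g y := by
  have hnormal : ContDiffAt ℝ 1 (fun q : E × ℝ => unitNormal g q.1) (x, r) :=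
    (contDiffAt_unitNormal hg hx).comp (x, r) contDiffAt_fst
  have hF : ContDiffAt ℝ 1 (fun q : E × ℝ => h (q.1 + q.2 • unitNormal g q.1) - g q.1) (x, r) :=
    (hh.contDiffAt.comp (x, r) (contDiffAt_fst.add (contDiffAt_snd.smul hnormal))).sub
      ((hg.of_le one_le_two).contDiffAt.comp (x, r) contDiffAt_fst)
  have hline : HasDerivAt (fun s : ℝ => x + s • unitNormal g x) (unitNormal g x) r := by
    simpa only [id, one_smul] using ((hasDerivAt_id r).smul_const (unitNormal g x)).const_add x
  have hpartial := ((hh.differentiable one_ne_zero _).hasFDerivAt.comp_hasDerivAt r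
    hline).sub_const (g x)
  obtain ⟨ψ, hψ, hψx, hroot⟩ :=
    exists_contDiffAt_implicit_of_hasDerivAt one_ne_zero hF hpartial hderiv
  refine ⟨ψ, hψ, hψx, hroot.mono fun y hy => ?_⟩
  rwa [hr, sub_self, sub_eq_zero] at hy

end UnitNormal

section Injectivity

variable {B : Set E} {g : E → ℝ} {A₁ R : ℝ} {K : ℝ≥0} {x y : E}

theorem mul_abs_inner_unitNormal_le_of_apply_eq (hB : Convex ℝ B) (hg : Differentiable ℝ g)
    (hlip : LipschitzOnWith K (fderiv ℝ g) B) (hA₁ : 0 < A₁) (hx : x ∈ B) (hy : y ∈ B)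
    (hgx : A₁ < ‖gradient g x‖) (hxy : g x = g y) :
    A₁ * |inner ℝ (unitNormal g x) (y - x)| ≤ K * ‖y - x‖ ^ 2 := by
  have hx₀ : gradient g x ≠ 0 := norm_pos_iff.1 (hA₁.trans hgx)
  calc A₁ * |inner ℝ (unitNormal g x) (y - x)|
      ≤ ‖gradient g x‖ * |inner ℝ (unitNormal g x) (y - x)| := by gcongr
    _ = |g y - g x - fderiv ℝ g x (y - x)| := by
      rw [hxy, sub_self, zero_sub, abs_neg, ← norm_gradient_mul_inner_unitNormal hx₀, abs_mul,
        abs_norm]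
    _ ≤ K * ‖y - x‖ ^ 2 := abs_sub_sub_fderiv_le_of_lipschitzOnWith hB hg hlip hx hy

-- With `u = y - x`, expand `|u|² = r ⟪n x, u⟫ - s ⟪n y, u⟫`: a level set is tangent to its normal
-- hyperplane, so both inner products are quadratic in `u`.
theorem eq_of_add_smul_unitNormal_eq (hB : Convex ℝ B) (hg : Differentiable ℝ g)
    (hlip : LipschitzOnWith K (fderiv ℝ g) B) (hA₁ : 0 < A₁) (hKR : 2 * (K * R) < A₁) (hx : x ∈ B)
    (hy : y ∈ B) (hgx : A₁ < ‖gradient g x‖) (hgy : A₁ < ‖gradient g y‖) (hxy : g x = g y)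
    {r s : ℝ} (hr : |r| ≤ R) (hs : |s| ≤ R)
    (heq : x + r • unitNormal g x = y + s • unitNormal g y) : x = y := by
  have hR : 0 ≤ R := (abs_nonneg r).trans hr
  have hnx := mul_abs_inner_unitNormal_le_of_apply_eq hB hg hlip hA₁ hx hy hgx hxy
  have hny := mul_abs_inner_unitNormal_le_of_apply_eq hB hg hlip hA₁ hy hx hgy hxy.symm
  rw [norm_sub_rev x y, ← neg_sub y x, inner_neg_right, abs_neg] at hny
  have hu : y - x = r • unitNormal g x - s • unitNormal g y :=
    sub_eq_sub_iff_add_eq_add.2 (by rw [← heq, add_comm])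
  have hexpand : ‖y - x‖ ^ 2 ≤
      R * |inner ℝ (unitNormal g x) (y - x)| + R * |inner ℝ (unitNormal g y) (y - x)| :=
    calc ‖y - x‖ ^ 2
        = r * inner ℝ (unitNormal g x) (y - x) - s * inner ℝ (unitNormal g y) (y - x) := by
          rw [← real_inner_smul_left, ← real_inner_smul_left, ← inner_sub_left, ← hu,
            real_inner_self_eq_norm_sq]
      _ ≤ |r * inner ℝ (unitNormal g x) (y - x)| + |s * inner ℝ (unitNormal g y) (y - x)| :=
          (le_abs_self _).trans (abs_sub _ _)
      _ ≤ _ := by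
          rw [abs_mul, abs_mul]
          gcongr
  have hle : A₁ * ‖y - x‖ ^ 2 ≤ 2 * (K * R) * ‖y - x‖ ^ 2 := by
    linear_combination A₁ * hexpand + R * hnx + R * hny
  have hzero : ‖y - x‖ ^ 2 = 0 := by nlinarith [sq_nonneg ‖y - x‖]
  exact (sub_eq_zero.1 (norm_eq_zero.1 (pow_eq_zero_iff two_ne_zero |>.1 hzero))).symm

end Injectivity

/-- `r` is an admissible displacement of `x` along the unit normal of `g`: it has length at most
`R`, and it moves `x` to a point of `B` at which the perturbation `h` of `g` takes the value
`g x`. -/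
structure IsNormalShift (g h : E → ℝ) (B : Set E) (R : ℝ) (x : E) (r : ℝ) : Prop where
  abs_le_radius : |r| ≤ R
  mem : x + r • unitNormal g x ∈ B
  apply_eq : h (x + r • unitNormal g x) = g x

namespace IsNormalShift

variable {g h : E → ℝ} {B : Set E} {R : ℝ} {x : E} {r : ℝ}

theorem zero (hR : 0 ≤ R) (hx : x ∈ B) (hgh : h x = g x) : IsNormalShift g h B R x 0 where
  abs_le_radius := by rwa [abs_zero]
  mem := by rwa [zero_smul, add_zero]
  apply_eq := by rwa [zero_smul, add_zero]

theorem mem_inter_closedBall (hr : IsNormalShift g h B R x r) (hx : gradient g x ≠ 0) :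
    x + r • unitNormal g x ∈ B ∩ closedBall x R :=
  ⟨hr.mem, (add_smul_unitNormal_mem_closedBall hx).2 hr.abs_le_radius⟩

variable {δ : ℝ}

theorem unique (hB : Convex ℝ B) (hh : Differentiable ℝ h)
    (hδ : ∀ z ∈ B ∩ closedBall x R, ‖fderiv ℝ h z - fderiv ℝ g x‖ ≤ δ) (hx : gradient g x ≠ 0)
    (hδx : δ < ‖gradient g x‖) {s : ℝ} (hr : IsNormalShift g h B R x r)
    (hs : IsNormalShift g h B R x s) : r = s := by
  have hle := sub_mul_abs_sub_le_abs_sub (hB.inter (convex_closedBall x R)) hh hδ hx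
    (hs.mem_inter_closedBall hx) (hr.mem_inter_closedBall hx)
  rw [hr.apply_eq, hs.apply_eq, sub_self, abs_zero] at hle
  exact sub_eq_zero.1 (abs_nonpos_iff.1
    (nonpos_of_mul_nonpos_right hle (sub_pos.2 hδx)))

theorem abs_lt (hB : Convex ℝ B) (hg : Differentiable ℝ g)
    (hδ : ∀ z ∈ B ∩ closedBall x R, ‖fderiv ℝ g z - fderiv ℝ g x‖ ≤ δ) (hx : gradient g x ≠ 0)
    {A₀ : ℝ} (hgh : ∀ z ∈ B, |h z - g z| ≤ A₀)
    (hA₀ : A₀ < (‖gradient g x‖ - δ) * R) (hxB : x ∈ B) (hr : IsNormalShift g h B R x r) :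
    |r| < R := by
  have hR : 0 ≤ R := (abs_nonneg r).trans hr.abs_le_radius
  have hx_mem : x + (0 : ℝ) • unitNormal g x ∈ B ∩ closedBall x R := by
    rw [zero_smul, add_zero]
    exact ⟨hxB, mem_closedBall_self hR⟩
  have hmargin : 0 < ‖gradient g x‖ - δ :=
    pos_of_mul_pos_left (((abs_nonneg _).trans (hgh x hxB)).trans_lt hA₀) hR
  refine lt_of_mul_lt_mul_left ?_ hmargin.le
  calc (‖gradient g x‖ - δ) * |r| ≤ |g (x + r • unitNormal g x) - g x| := by
        simpa only [sub_zero, zero_smul, add_zero] using sub_mul_abs_sub_le_abs_sub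
          (hB.inter (convex_closedBall x R)) hg hδ hx hx_mem (hr.mem_inter_closedBall hx)
    _ = |h (x + r • unitNormal g x) - g (x + r • unitNormal g x)| := by
        rw [hr.apply_eq, abs_sub_comm]
    _ ≤ A₀ := hgh _ hr.mem
    _ < (‖gradient g x‖ - δ) * R := hA₀

theorem exists_of_closedBall_subset (hg : Differentiable ℝ g) (hh : Continuous h)
    (hδ : ∀ z ∈ closedBall x R, ‖fderiv ℝ g z - fderiv ℝ g x‖ ≤ δ) (hx : gradient g x ≠ 0)
    (hR : 0 ≤ R) (hball : closedBall x R ⊆ B) {A₀ : ℝ}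
    (hgh : ∀ z ∈ closedBall x R, |h z - g z| ≤ A₀) (hA₀ : A₀ ≤ (‖gradient g x‖ - δ) * R) :
    ∃ r, IsNormalShift g h B R x r := by
  have hmem {a : ℝ} (ha : |a| ≤ R) : x + a • unitNormal g x ∈ closedBall x R :=
    (add_smul_unitNormal_mem_closedBall hx).2 ha
  have hdev {a : ℝ} (ha : |a| ≤ R) :
      |g (x + a • unitNormal g x) - g x - ‖gradient g x‖ * a| ≤ δ * |a| := by
    simpa only [sub_zero, zero_smul, add_zero] using abs_sub_sub_norm_gradient_mul_le
      (convex_closedBall x R) hg hδ hx (hmem (abs_zero.trans_le hR)) (hmem ha)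
  have hR' : |R| ≤ R := (abs_of_nonneg hR).le
  have hnegR : |-R| ≤ R := (abs_neg R).trans_le hR'
  have hlow : h (x + (-R) • unitNormal g x) ≤ g x := by
    have hgR := hdev hnegR
    rw [abs_neg, abs_of_nonneg hR] at hgR
    linarith [le_of_abs_le hgR, le_of_abs_le (hgh _ (hmem hnegR))]
  have hhigh : g x ≤ h (x + R • unitNormal g x) := by
    have hgR := hdev hR'
    rw [abs_of_nonneg hR] at hgR
    linarith [neg_le_of_abs_le hgR, neg_le_of_abs_le (hgh _ (hmem hR'))]
  have hcont : Continuous fun a : ℝ => h (x + a • unitNormal g x) := by fun_prop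
  obtain ⟨r, hr, hroot⟩ :=
    intermediate_value_Icc (neg_le_self hR) hcont.continuousOn ⟨hlow, hhigh⟩
  exact ⟨r, abs_le.2 hr, hball (hmem (abs_le.2 hr)), hroot⟩

variable {V : Set E} {ρ : E → ℝ}

theorem contDiffWithinAt_of_mem_interior (hg : ContDiff ℝ 2 g) (hh : ContDiff ℝ 1 h)
    (huniq : ∀ y ∈ V, ∀ s, IsNormalShift g h B R y s → ρ y = s) (hx : gradient g x ≠ 0)
    (hρ : h (x + ρ x • unitNormal g x) = g x) (hlt : |ρ x| < R)
    (hint : x + ρ x • unitNormal g x ∈ interior B)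
    (hderiv : fderiv ℝ h (x + ρ x • unitNormal g x) (unitNormal g x) ≠ 0) :
    ContDiffWithinAt ℝ 1 ρ V x := by
  obtain ⟨ψ, hψ, hψx, hroot⟩ := exists_contDiffAt_root_along_unitNormal hg hh hx hρ hderiv
  have hψR : ∀ᶠ y in 𝓝 x, |ψ y| < R :=
    hψ.continuousAt.abs.eventually_lt_const (by simpa only [hψx] using hlt)
  have hψB : ∀ᶠ y in 𝓝 x, y + ψ y • unitNormal g y ∈ interior B := by
    have hcont : ContinuousAt (fun y => y + ψ y • unitNormal g y) x :=
      continuousAt_id.add (hψ.continuousAt.smul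
        (contDiffAt_unitNormal (n := 1) hg hx).continuousAt)
    exact hcont.eventually_mem (isOpen_interior.mem_nhds (by rwa [hψx]))
  refine hψ.contDiffWithinAt.congr_of_eventuallyEq ?_ hψx.symm
  filter_upwards [self_mem_nhdsWithin, mem_nhdsWithin_of_mem_nhds hψR,
    mem_nhdsWithin_of_mem_nhds hψB, mem_nhdsWithin_of_mem_nhds hroot] with y hyV hyR hyB hy
  exact huniq y hyV _ ⟨hyR.le, interior_subset hyB, hy⟩

-- Within distance `R` of the complement of `interior B` the shift is locally `0`; at the other
-- points it lands in `interior B`, where the implicit function theorem applies.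
theorem contDiffOn_of_unique (hg : ContDiff ℝ 2 g) (hh : ContDiff ℝ 1 h) (hVB : V ⊆ B)
    (hgh : ∀ y ∈ B, ∀ z ∉ interior B, dist y z ≤ R → h y = g y)
    (hgrad : ∀ y ∈ V, gradient g y ≠ 0) (hρ : ∀ y ∈ V, IsNormalShift g h B R y (ρ y))
    (huniq : ∀ y ∈ V, ∀ s, IsNormalShift g h B R y s → ρ y = s) (hlt : ∀ y ∈ V, |ρ y| < R)
    (hderiv : ∀ y ∈ V, fderiv ℝ h (y + ρ y • unitNormal g y) (unitNormal g y) ≠ 0) :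
    ContDiffOn ℝ 1 ρ V := by
  intro x hx
  by_cases hball : ball x R ⊆ interior B
  · have hmem : x + ρ x • unitNormal g x ∈ ball x R := by
      rw [mem_ball_iff_norm, add_sub_cancel_left, norm_smul_unitNormal (hgrad x hx)]
      exact hlt x hx
    exact contDiffWithinAt_of_mem_interior hg hh huniq (hgrad x hx) (hρ x hx).apply_eq (hlt x hx)
      (hball hmem) (hderiv x hx)
  obtain ⟨z, hz, hzB⟩ := not_subset.1 hball
  have hzero : ∀ y ∈ V, dist y z < R → ρ y = 0 := fun y hy hyz =>
    huniq y hy 0 (.zero (dist_nonneg.trans hyz.le) (hVB hy) (hgh y (hVB hy) z hzB hyz.le))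
  have hnear : ∀ᶠ y in 𝓝 x, dist y z < R :=
    (continuous_id.dist continuous_const).continuousAt.eventually_lt_const (mem_ball'.1 hz)
  refine (contDiffWithinAt_const (c := (0 : ℝ))).congr_of_eventuallyEq ?_
    (hzero x hx (mem_ball'.1 hz))
  filter_upwards [self_mem_nhdsWithin, mem_nhdsWithin_of_mem_nhds hnear] with y hyV hy
  exact hzero y hyV hy

theorem exists_contDiffOn (hB : Convex ℝ B) (hg : ContDiff ℝ 2 g) (hh : ContDiff ℝ 1 h)
    (hVB : V ⊆ B) (hR : 0 ≤ R) (hgrad : ∀ x ∈ V, gradient g x ≠ 0)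
    (hδg : ∀ x ∈ V, ∀ z ∈ B ∩ closedBall x R, ‖fderiv ℝ g z - fderiv ℝ g x‖ ≤ δ) {δ' : ℝ}
    (hδh : ∀ x ∈ V, ∀ z ∈ B ∩ closedBall x R, ‖fderiv ℝ h z - fderiv ℝ g x‖ ≤ δ')
    (hδ' : ∀ x ∈ V, δ' < ‖gradient g x‖) {A₀ : ℝ} (hgh : ∀ z ∈ B, |h z - g z| ≤ A₀)
    (hA₀ : ∀ x ∈ V, A₀ < (‖gradient g x‖ - δ) * R)
    (hboundary : ∀ x ∈ B, ∀ z ∉ interior B, dist x z ≤ R → h x = g x) :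
    ∃ ρ : E → ℝ, ContDiffOn ℝ 1 ρ V ∧ ∀ x ∈ V, IsNormalShift g h B R x (ρ x) := by
  have hg' : Differentiable ℝ g := hg.differentiable two_ne_zero
  have hexists : ∀ x ∈ V, ∃ r, IsNormalShift g h B R x r := fun x hx => by
    by_cases hball : closedBall x R ⊆ interior B
    · have hballB := hball.trans interior_subset
      exact exists_of_closedBall_subset hg' hh.continuous
        (fun z hz => hδg x hx z ⟨hballB hz, hz⟩) (hgrad x hx) hR hballB
        (fun z hz => hgh z (hballB hz)) (hA₀ x hx).le
    · obtain ⟨z, hz, hzB⟩ := not_subset.1 hball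
      exact ⟨0, .zero hR (hVB hx) (hboundary x (hVB hx) z hzB (mem_closedBall'.1 hz))⟩
  choose! ρ hρ using hexists
  exact ⟨ρ, contDiffOn_of_unique hg hh hVB hboundary hgrad hρ
    (fun x hx s hs => (hρ x hx).unique hB (hh.differentiable one_ne_zero) (hδh x hx) (hgrad x hx)
      (hδ' x hx) hs)
    (fun x hx => (hρ x hx).abs_lt hB hg' (hδg x hx) (hgrad x hx) hgh (hA₀ x hx) (hVB hx))
    (fun x hx => (fderiv_unitNormal_pos ((hδh x hx _ ((hρ x hx).mem_inter_closedBall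
      (hgrad x hx))).trans_lt (hδ' x hx))).ne'), hρ⟩

theorem injOn {K : ℝ≥0} {A₁ : ℝ} (hB : Convex ℝ B) (hg : Differentiable ℝ g)
    (hlip : LipschitzOnWith K (fderiv ℝ g) B) (hA₁ : 0 < A₁) (hKR : 2 * (K * R) < A₁) (hVB : V ⊆ B)
    (hgrad : ∀ x ∈ V, A₁ < ‖gradient g x‖) (hρ : ∀ x ∈ V, IsNormalShift g h B R x (ρ x)) :
    InjOn (fun x => x + ρ x • unitNormal g x) V := fun x hx y hy hxy =>
  have hlevel : g x = g y :=
    (hρ x hx).apply_eq.symm.trans ((congrArg h hxy).trans (hρ y hy).apply_eq)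
  eq_of_add_smul_unitNormal_eq hB hg hlip hA₁ hKR (hVB hx) (hVB hy) (hgrad x hx) (hgrad y hy)
    hlevel (hρ x hx).abs_le_radius (hρ y hy).abs_le_radius hxy

end IsNormalShift

theorem statement_7_general {B : Set E} (hB : Convex ℝ B) {g p : E → ℝ} (hg : ContDiff ℝ 2 g)
    (hp : ContDiff ℝ 1 p) {ℓ A₀ A₁ : ℝ} {A₂ : ℝ≥0} (hA₁ : 0 < A₁) (hA₀ : 0 < A₀)
    (hA : 4 * A₀ * A₂ < A₁ ^ 2) (hlevel : ∀ x ∈ B, g x = ℓ → A₁ < ‖gradient g x‖)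
    (hlip : LipschitzOnWith A₂ (fderiv ℝ g) B) (hp₀ : ∀ x ∈ B, |p x| ≤ A₀)
    (hp₁ : ∀ x ∈ B, ‖gradient p x‖ ≤ A₁ / 2)
    (hboundary : ∀ x ∈ B, ∀ z ∉ interior B, dist x z ≤ 2 * A₀ / A₁ → p x = 0) :
    ∃ (V : Set E) (φ : E → E),
      (∃ U : Set E, IsOpen U ∧ V = U ∩ B) ∧
      {x | g x = ℓ} ∩ B ⊆ V ∧
      (∀ x ∈ V, gradient g x ≠ 0) ∧
      Set.InjOn φ V ∧
      ContDiffOn ℝ 1 φ V ∧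
      Set.MapsTo φ V B ∧
      ∀ x ∈ V, ∃ r : ℝ, |r| ≤ 2 * A₀ / A₁ ∧
        φ x = x + r • (‖gradient g x‖⁻¹ • gradient g x) ∧
        g (φ x) + p (φ x) = g x := by
  set R := 2 * A₀ / A₁ with hR
  set V := {x | A₁ < ‖gradient g x‖} ∩ B
  have hRpos : 0 < R := by positivity
  have hA₁R : A₁ / 2 * R = A₀ := by rw [hR]; field_simp
  have hA₂R : A₂ * R < A₁ / 2 := by
    rw [hR, mul_div_assoc', div_lt_iff₀ hA₁]
    linarith
  have hgrad : ∀ x ∈ V, gradient g x ≠ 0 := fun x hx => norm_pos_iff.1 (hA₁.trans hx.1)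
  have hδg : ∀ x ∈ V, ∀ z ∈ B ∩ closedBall x R, ‖fderiv ℝ g z - fderiv ℝ g x‖ ≤ A₂ * R :=
    fun x hx z hz => norm_fderiv_sub_le_of_lipschitzOnWith hlip hx.2 hz
  have hδh : ∀ x ∈ V, ∀ z ∈ B ∩ closedBall x R,
      ‖fderiv ℝ (g + p) z - fderiv ℝ g x‖ ≤ A₂ * R + A₁ / 2 := fun x hx z hz => by
    rw [fderiv_add (hg.differentiable two_ne_zero z) (hp.differentiable one_ne_zero z),
      add_sub_right_comm]
    exact norm_add_le_of_le (hδg x hx z hz) (norm_gradient p z ▸ hp₁ z hz.1)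
  have hmargin : ∀ x ∈ V, A₀ < (‖gradient g x‖ - A₂ * R) * R := fun x hx => by
    rw [← hA₁R]
    gcongr
    linarith [hx.1.out]
  obtain ⟨ρ, hρ_smooth, hρ⟩ := IsNormalShift.exists_contDiffOn hB hg ((hg.of_le one_le_two).add hp)
    inter_subset_right hRpos.le hgrad hδg hδh (fun x hx => by linarith [hx.1.out])
    (fun z hz => by simpa using hp₀ z hz) hmargin
    (fun x hx z hz hxz => by simpa using hboundary x hx z hz hxz)
  exact ⟨V, fun x => x + ρ x • unitNormal g x,
    ⟨_, isOpen_lt continuous_const (contDiff_gradient (n := 1) hg).continuous.norm, rfl⟩,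
    fun x hx => ⟨hlevel x hx.2 hx.1, hx.2⟩, hgrad,
    IsNormalShift.injOn hB (hg.differentiable two_ne_zero) hlip hA₁ (by linarith)
      inter_subset_right (fun x hx => hx.1) hρ,
    contDiffOn_id.add (hρ_smooth.smul fun x hx =>
      (contDiffAt_unitNormal (n := 1) hg (hgrad x hx)).contDiffWithinAt),
    fun x hx => (hρ x hx).mem,
    fun x hx => ⟨ρ x, (hρ x hx).abs_le_radius, rfl, (hρ x hx).apply_eq⟩⟩

theorem convex_unitCube (d : ℕ) (v : Fin d → ℤ) : Convex ℝ (unitCube d v) := by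
  intro x hx y hy a b ha hb hab i
  exact convex_Icc (v i : ℝ) (v i + 1) (hx i) (hy i) ha hb hab

/-- Existence of the normal projection `φ` from the level set
`{g = ℓ} ∩ B` of a quantitatively nondegenerate function `g` onto the level set of the
perturbed function `g + p`. -/
theorem statement_7 (d : ℕ) (hd : 1 ≤ d) :
    ∃ C : ℝ, 20 ≤ C ∧
      ∀ (w : Fin d → ℤ) (ℓ : ℝ) (g p : Euc d → ℝ),
        ContDiff ℝ 2 g → ContDiff ℝ 2 p →
        ∀ (A₀ A₁ A₂ : ℝ),
          0 < A₁ → A₁ < 1 → 1 ≤ A₂ → 0 < A₀ → A₀ < A₁ ^ 2 / (C * A₂) →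
          (∀ x ∈ unitCube d w, g x = ℓ → A₁ < ‖gradient g x‖) →
          (∀ x ∈ unitCube d w, ‖fderiv ℝ (fderiv ℝ g) x‖ < A₂) →
          (∀ x ∈ unitCube d w, max |p x| ‖gradient p x‖ < A₀) →
          (∀ x ∈ unitCube d w,
            Metric.infDist x (frontier (unitCube d w)) ≤ 2 * A₀ / A₁ → p x = 0) →
          ∃ (V : Set (Euc d)) (φ : Euc d → Euc d),
            (∃ U : Set (Euc d), IsOpen U ∧ V = U ∩ unitCube d w) ∧
            {x | g x = ℓ} ∩ unitCube d w ⊆ V ∧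
            (∀ x ∈ V, gradient g x ≠ 0) ∧
            Set.InjOn φ V ∧
            ContDiffOn ℝ 1 φ V ∧
            Set.MapsTo φ V (unitCube d w) ∧
            ∀ x ∈ V, ∃ r : ℝ, |r| ≤ 2 * A₀ / A₁ ∧
              φ x = x + r • (‖gradient g x‖⁻¹ • gradient g x) ∧
              g (φ x) + p (φ x) = g x := by
  refine ⟨20, le_rfl, fun w ℓ g p hg hp A₀ A₁ A₂ hA₁ hA₁' hA₂ hA₀ hA hlevel hhess hpert hpf => ?_⟩
  lift A₂ to ℝ≥0 using zero_le_one.trans hA₂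
  rw [lt_div_iff₀ (by positivity)] at hA
  have hA₀A₁ : A₀ ≤ A₁ / 2 := by nlinarith
  exact statement_7_general (convex_unitCube d w) hg (hp.of_le one_le_two) hA₁ hA₀ (by nlinarith)
    hlevel
    ((convex_unitCube d w).lipschitzOnWith_of_nnnorm_fderiv_le
      (fun x _ => (hg.fderiv_right (m := 1) le_rfl).differentiable one_ne_zero x)
      fun x hx => (hhess x hx).le)
    (fun x hx => (le_max_left _ _).trans (hpert x hx).le)
    (fun x hx => ((le_max_right _ _).trans (hpert x hx).le).trans hA₀A₁)
    fun x hx z hz hxz => hpf x hx ((infDist_frontier_le_dist hx hz).trans hxz)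

end
end
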